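/- arXiv:1611.00982 — 2 statements merged into one kernel-verified Lean document; each statement's English description precedes it below -/
import Mathlib

section
/- Let M be a 3-spherical Coxeter matrix on a finite index set I, with Coxeter system (W, {s_i : i ∈ I}) and length function ℓ. Let σ : I → I be a bijection with σ ∘ σ = id and M(σ i, σ j) = M(i, j) for all i, j, having no fixed vertices (σ i ≠ i for all i) and no fixed edges (M(i, σ i) = 2 for all i), and let θ : W → W be the group automorphism determined by θ(s_i) = s_{σ i} for all i ∈ I. Then for every u ∈ W with θ(u) = u⁻¹ there exists w ∈ W such that u = w · θ(w)⁻¹ and ℓ(u) = 2 · ℓ(w). In particular, {u ∈ W : θ(u) = u⁻¹} = {w · θ(w)⁻¹ : w ∈ W}. -/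
/-!
Two facts about Coxeter groups carry the proof. First, the parity of the number of occurrences of
`t` in the right inversion sequence of a word depends only on the product `w` of the word; it
decides whether `t` is an inversion of `w` and obeys a cocycle rule in `w`, from which the needed
forms of the exchange condition follow. Second, distinct indices give distinct simple reflections,
by the geometric representation.

A twisted involution `u ≠ 1` with left descent `i` has `σ i` as a right descent. Unless
`s i * u * s (σ i) = u`, this product is a twisted involution of length `ℓ u - 2`, and induction
applies. In the exceptional case `s i * u` is a shorter twisted involution, so it has the form
`w * (θ w)⁻¹`, and then `θ` fixes the reflection `w⁻¹ * s i * w`. But `θ` fixes no reflection `t`: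
if `i` is a descent of `t`, then so is `σ i`, and as `s i` and `s (σ i)` commute and differ,
conjugating by `s i` or by `s i * s (σ i)` yields a shorter fixed reflection.
-/

namespace TwistedInvolution

open CoxeterSystem

section InversionParity

variable {I W : Type*} [Group W] {M : CoxeterMatrix I} (cs : CoxeterSystem M W)

theorem prod_map_alternatingWord_two_mul {G : Type*} [Monoid G] (f : I → G) (i j : I) (m : ℕ) :
    ((alternatingWord i j (2 * m)).map f).prod = (f i * f j) ^ m := by
  induction m with
  | zero => simp [alternatingWord]
  | succ m ih => simp [mul_add, alternatingWord_succ, pow_succ, ih]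

theorem reverse_alternatingWord_two_mul (i j : I) (m : ℕ) :
    (alternatingWord i j (2 * m)).reverse = alternatingWord j i (2 * m) := by
  induction m with
  | zero => rfl
  | succ m ih =>
    rw [mul_add, mul_one, alternatingWord_succ' j, alternatingWord_succ' j]
    simp [alternatingWord_succ, ih, parity_simps]

theorem drop_leftInvSeq_alternatingWord (i j : I) :
    (cs.leftInvSeq (alternatingWord i j (2 * M i j))).drop (M i j) =
      (cs.leftInvSeq (alternatingWord i j (2 * M i j))).take (M i j) := by
  apply List.ext_getElem
  · simp [two_mul]
  · intro k _ hk
    have hk : k < M i j := by simp at hk; omega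
    simp only [List.getElem_drop, List.getElem_take]
    rw [getElem_leftInvSeq_alternatingWord cs i j _ _ (by omega),
      getElem_leftInvSeq_alternatingWord cs i j _ _ (by omega),
      prod_alternatingWord_eq_mul_pow, prod_alternatingWord_eq_mul_pow,
      show (2 * (M i j + k) + 1) / 2 = M i j + k by omega, show (2 * k + 1) / 2 = k by omega,
      pow_add, simple_mul_simple_pow', one_mul]
    simp [parity_simps]

variable [DecidableEq W]

/-- The action of a simple reflection on signed reflections, as in the standard proof of the
exchange condition: conjugation, with a change of sign at the simple reflection itself. It is
defined on all of `W` rather than on reflections only, and signs are written additively. -/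
def signedConj (i : I) : Function.End (W × ZMod 2) :=
  fun p ↦ (cs.simple i * p.1 * cs.simple i, p.2 + if p.1 = cs.simple i then 1 else 0)

theorem signedConj_smul (i : I) (t : W) (e : ZMod 2) :
    signedConj cs i • (t, e) =
      (cs.simple i * t * cs.simple i, e + if t = cs.simple i then 1 else 0) := rfl

theorem prod_map_signedConj_smul (ω : List I) (t : W) (e : ZMod 2) :
    (ω.map (signedConj cs)).prod • (t, e) =
      (cs.wordProd ω * t * (cs.wordProd ω)⁻¹, e + ((cs.rightInvSeq ω).count t : ZMod 2)) := by
  induction ω with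
  | nil => simp
  | cons i ω ih =>
    have conj_eq_iff : cs.wordProd ω * t * (cs.wordProd ω)⁻¹ = cs.simple i ↔
        (cs.wordProd ω)⁻¹ * cs.simple i * cs.wordProd ω = t := by
      rw [mul_inv_eq_iff_eq_mul, mul_assoc, inv_mul_eq_iff_eq_mul, eq_comm]
    rw [List.map_cons, List.prod_cons, mul_smul, ih, signedConj_smul,
      if_congr conj_eq_iff rfl rfl]
    simp only [rightInvSeq, List.count_cons, wordProd_cons, beq_iff_eq, mul_inv_rev, inv_simple,
      mul_assoc, Prod.mk.injEq, true_and]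
    push_cast
    ring

theorem even_count_rightInvSeq_alternatingWord (i j : I) (t : W) :
    Even ((cs.rightInvSeq (alternatingWord i j (2 * M i j))).count t) := by
  rw [← reverse_alternatingWord_two_mul, rightInvSeq_reverse, List.count_reverse, M.symmetric i j,
    ← List.take_append_drop (M j i) (cs.leftInvSeq _), List.count_append,
    drop_leftInvSeq_alternatingWord]
  exact ⟨_, rfl⟩

theorem isLiftable_signedConj : M.IsLiftable (signedConj cs) := by
  intro i j
  rw [← prod_map_alternatingWord_two_mul]
  refine FaithfulSMul.eq_of_smul_eq_smul (α := W × ZMod 2) fun ⟨t, e⟩ ↦ ?_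
  have wordProd_eq_one : cs.wordProd (alternatingWord i j (2 * M i j)) = 1 := by
    simp [prod_alternatingWord_eq_mul_pow]
  have count_eq_zero :
      ((cs.rightInvSeq (alternatingWord i j (2 * M i j))).count t : ZMod 2) = 0 :=
    (even_count_rightInvSeq_alternatingWord cs i j t).natCast_zmod_two
  rw [prod_map_signedConj_smul, wordProd_eq_one, count_eq_zero]
  simp only [one_mul, inv_one, mul_one, add_zero, one_smul]

/-- The action of `W` on signed elements extending `signedConj`. -/
noncomputable def signedConjHom : W →* Function.End (W × ZMod 2) :=
  cs.lift ⟨signedConj cs, isLiftable_signedConj cs⟩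

/-- The parity of the number of occurrences of `t` in the right inversion sequence of any word
with product `w`; see `inversionParity_wordProd`. -/
noncomputable def inversionParity (w t : W) : ZMod 2 :=
  (signedConjHom cs w • ((t, 0) : W × ZMod 2)).2

theorem signedConjHom_wordProd (ω : List I) :
    signedConjHom cs (cs.wordProd ω) = (ω.map (signedConj cs)).prod := by
  simp [signedConjHom, wordProd, map_list_prod, Function.comp_def,
    cs.lift_apply_simple (isLiftable_signedConj cs)]

theorem inversionParity_wordProd (ω : List I) (t : W) :
    inversionParity cs (cs.wordProd ω) t = ((cs.rightInvSeq ω).count t : ZMod 2) := by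
  rw [inversionParity, signedConjHom_wordProd, prod_map_signedConj_smul, zero_add]

theorem signedConjHom_smul (w t : W) (e : ZMod 2) :
    signedConjHom cs w • (t, e) = (w * t * w⁻¹, e + inversionParity cs w t) := by
  obtain ⟨ω, rfl⟩ := cs.wordProd_surjective w
  rw [inversionParity_wordProd, signedConjHom_wordProd, prod_map_signedConj_smul]

theorem inversionParity_mul (a b t : W) :
    inversionParity cs (a * b) t =
      inversionParity cs b t + inversionParity cs a (b * t * b⁻¹) := by
  rw [inversionParity, map_mul, mul_smul, signedConjHom_smul, signedConjHom_smul,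
    zero_add]

theorem inversionParity_one (t : W) : inversionParity cs 1 t = 0 := by
  simp [inversionParity]

theorem inversionParity_simple (i : I) (t : W) :
    inversionParity cs (cs.simple i) t = if t = cs.simple i then 1 else 0 := by
  have h := inversionParity_wordProd cs [i] t
  rw [wordProd_singleton, rightInvSeq_singleton, List.count_singleton] at h
  simpa [eq_comm (a := t)] using h

theorem inversionParity_add_inversionParity_inv (w t : W) :
    inversionParity cs w t + inversionParity cs w⁻¹ (w * t * w⁻¹) = 0 := by
  rw [← inversionParity_mul, inv_mul_cancel, inversionParity_one]

/-- The contributions of `x` and `x⁻¹` to the inversion parity of `t = x * s i * x⁻¹` cancel. -/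
theorem inversionParity_of_commute {t r : W} (ht : cs.IsReflection t) (h : Commute t r) :
    inversionParity cs t r = if r = t then 1 else 0 := by
  obtain ⟨x, i, rfl⟩ := ht
  have conj_conj_eq : cs.simple i * (x⁻¹ * r * x) * cs.simple i = x⁻¹ * r * x := by
    have h : x * cs.simple i * x⁻¹ * r = r * (x * cs.simple i * x⁻¹) := h
    have h := congrArg (fun y ↦ x⁻¹ * y * (x * cs.simple i)) h
    simpa [mul_assoc] using h
  have conj_eq_iff : x⁻¹ * r * x = cs.simple i ↔ r = x * cs.simple i * x⁻¹ := by
    rw [mul_assoc, inv_mul_eq_iff_eq_mul, eq_mul_inv_iff_mul_eq]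
  have cancel := inversionParity_add_inversionParity_inv cs x⁻¹ r
  rw [inv_inv] at cancel
  rw [inversionParity_mul, inversionParity_mul, inversionParity_simple]
  simp only [inv_inv, inv_simple, conj_conj_eq, conj_eq_iff]
  linear_combination cancel

theorem isRightInversion_of_inversionParity_ne_zero {w t : W} (h : inversionParity cs w t ≠ 0) :
    cs.IsRightInversion w t := by
  obtain ⟨ω, hω, rfl⟩ := cs.exists_isReduced w
  refine cs.isRightInversion_of_mem_rightInvSeq hω ?_
  contrapose! h
  simp [inversionParity_wordProd, List.count_eq_zero_of_not_mem h]

theorem inversionParity_eq_one_iff {w t : W} :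
    inversionParity cs w t = 1 ↔ cs.IsRightInversion w t := by
  refine ⟨fun h ↦ isRightInversion_of_inversionParity_ne_zero cs (h ▸ one_ne_zero), fun h ↦ ?_⟩
  by_contra hne
  have parity_eq_zero : inversionParity cs w t = 0 := by
    generalize inversionParity cs w t = e at hne
    revert e
    decide
  refine h.1.not_isRightInversion_mul_left_iff.mpr h
    (isRightInversion_of_inversionParity_ne_zero cs ?_)
  simp [inversionParity_mul, inversionParity_of_commute cs h.1 (Commute.refl t), parity_eq_zero]

end InversionParity

section Exchange

variable {I W : Type*} [Group W] {M : CoxeterMatrix I} (cs : CoxeterSystem M W)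

theorem eq_of_isRightInversion_of_commute {t r : W} (ht : cs.IsReflection t)
    (hr : cs.IsRightInversion t r) (h : Commute t r) : r = t := by
  classical
  rw [← inversionParity_eq_one_iff, inversionParity_of_commute cs ht h] at hr
  simpa using hr

theorem isRightInversion_simple_mul_iff {w t : W} {i : I} (h : w * t * w⁻¹ ≠ cs.simple i) :
    cs.IsRightInversion (cs.simple i * w) t ↔ cs.IsRightInversion w t := by
  classical
  simp [← inversionParity_eq_one_iff, inversionParity_mul, inversionParity_simple, h]

theorem isRightInversion_mul_simple_iff {w t : W} {i : I} (h : t ≠ cs.simple i) :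
    cs.IsRightInversion (w * cs.simple i) t ↔
      cs.IsRightInversion w (cs.simple i * t * cs.simple i) := by
  classical
  simp [← inversionParity_eq_one_iff, inversionParity_mul, inversionParity_simple, h]

theorem length_simple_mul_mul_simple {w : W} {i j : I} (hi : cs.IsLeftDescent w i)
    (hj : cs.IsRightDescent w j) (h : cs.simple i * w * cs.simple j ≠ w) :
    cs.length (cs.simple i * w * cs.simple j) + 2 = cs.length w := by
  have hconj : w * cs.simple j * w⁻¹ ≠ cs.simple i := by
    contrapose! h
    rw [mul_assoc, mul_inv_eq_iff_eq_mul.mp h, simple_mul_simple_cancel_left]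
  rw [← isRightInversion_simple_iff_isRightDescent, ← isRightInversion_simple_mul_iff cs hconj,
    isRightInversion_simple_iff_isRightDescent, isRightDescent_iff] at hj
  rw [isLeftDescent_iff] at hi
  omega

theorem length_simple_conj {t : W} {i : I} (ht : cs.IsReflection t) (hi : cs.IsRightDescent t i)
    (hne : cs.simple i ≠ t) : cs.length (cs.simple i * t * cs.simple i) + 2 = cs.length t := by
  have left_descent : cs.IsLeftDescent t i := by rwa [← isRightDescent_inv_iff, ht.inv]
  refine length_simple_mul_mul_simple cs left_descent hi fun hconj ↦ hne ?_
  refine eq_of_isRightInversion_of_commute cs ht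
    ((cs.isRightInversion_simple_iff_isRightDescent t i).mpr hi) ?_
  calc t * cs.simple i = cs.simple i * t * cs.simple i * cs.simple i := by rw [hconj]
    _ = cs.simple i * t := by simp

theorem isRightDescent_simple_conj {w : W} {i j : I} (hij : cs.simple j ≠ cs.simple i)
    (hcomm : Commute (cs.simple i) (cs.simple j)) (hj : cs.IsRightDescent w j)
    (h : w * cs.simple j * w⁻¹ ≠ cs.simple i) :
    cs.IsRightDescent (cs.simple i * w * cs.simple i) j := by
  rw [← isRightInversion_simple_iff_isRightDescent] at hj ⊢
  rwa [isRightInversion_mul_simple_iff cs hij, hcomm.eq, simple_mul_simple_cancel_right,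
    isRightInversion_simple_mul_iff cs h]

end Exchange

section GeometricRepresentation

open Module Real

theorem eval_chebyshevS_eq_zero {φ : ℝ} (hφ : sin φ ≠ 0) {k : ℤ} (h : sin ((k + 1) * φ) = 0) :
    (Polynomial.Chebyshev.S ℝ k).eval (2 * cos φ) = 0 :=
  (mul_eq_zero.mp ((Polynomial.Chebyshev.S_two_mul_real_cos φ k).trans h)).resolve_right hφ

theorem eval_chebyshevS_add_eval_chebyshevS_eq_zero {φ : ℝ} (hφ : sin φ ≠ 0) {k : ℤ}
    (h : sin ((k + 1) * φ) + sin (k * φ) = 0) :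
    (Polynomial.Chebyshev.S ℝ k).eval (2 * cos φ) +
      (Polynomial.Chebyshev.S ℝ (k - 1)).eval (2 * cos φ) = 0 := by
  refine (mul_eq_zero.mp ?_).resolve_right hφ
  rw [add_mul, Polynomial.Chebyshev.S_two_mul_real_cos, Polynomial.Chebyshev.S_two_mul_real_cos]
  simpa using h

theorem reflection_mul_reflection_pow_eq_one {V : Type*} [AddCommGroup V] [Module ℝ V]
    {x y : V} {f g : Dual ℝ V} (hf : f x = 2) (hg : g y = 2) {m : ℕ} (hm : 3 ≤ m)
    (h : f y * g x = 4 * cos (π / m) ^ 2) :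
    (reflection hf * reflection hg) ^ m = 1 := by
  set φ : ℝ := 2 * π / m with hφ
  have m_mul_φ : (m : ℝ) * φ = 2 * π := by
    rw [hφ]
    field_simp
  have sin_ne_zero : sin φ ≠ 0 := by
    have three_le : (3 : ℝ) ≤ m := by exact_mod_cast hm
    refine (sin_pos_of_pos_of_lt_pi (by positivity) ?_).ne'
    rw [hφ, div_lt_iff₀ (by positivity)]
    nlinarith [pi_pos]
  have trace_eq : 2 * cos φ = f y * g x - 2 := by
    rw [h, hφ, mul_div_assoc, cos_two_mul]
    ring
  ext z
  rw [reflection_mul_reflection_pow_apply _ _ m z (2 * cos φ) trace_eq]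
  rcases Nat.even_or_odd' m with ⟨k, rfl | rfl⟩
  · have S_eq_zero : (Polynomial.Chebyshev.S ℝ (k - 1)).eval (2 * cos φ) = 0 := by
      refine eval_chebyshevS_eq_zero sin_ne_zero ?_
      rw [show ((k - 1 : ℤ) + 1 : ℝ) * φ = π by push_cast at m_mul_φ ⊢; linarith, sin_pi]
    rw [show ((2 * k : ℕ) - 2 : ℤ) / 2 = k - 1 by omega,
      show ((2 * k : ℕ) - 1 : ℤ) / 2 = k - 1 by omega, S_eq_zero]
    simp
  · have S_add_S_eq_zero : (Polynomial.Chebyshev.S ℝ k).eval (2 * cos φ) +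
        (Polynomial.Chebyshev.S ℝ (k - 1)).eval (2 * cos φ) = 0 := by
      refine eval_chebyshevS_add_eval_chebyshevS_eq_zero sin_ne_zero ?_
      rw [show ((k : ℤ) + 1 : ℝ) * φ = 2 * π - k * φ by push_cast at m_mul_φ ⊢; linarith,
        sin_two_pi_sub, Int.cast_natCast, neg_add_cancel]
    rw [show ((2 * k + 1 : ℕ) - 1 : ℤ) / 2 = k by omega,
      show ((2 * k + 1 : ℕ) - 3 : ℤ) / 2 = k - 1 by omega,
      show ((2 * k + 1 : ℕ) : ℤ) / 2 = k by omega,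
      show ((2 * k + 1 : ℕ) - 2 : ℤ) / 2 = k - 1 by omega, S_add_S_eq_zero]
    simp

theorem reflection_mul_reflection_sq_eq_one {R V : Type*} [CommRing R] [AddCommGroup V]
    [Module R V] {x y : V} {f g : Dual R V} (hf : f x = 2) (hg : g y = 2) (hfy : f y = 0)
    (hgx : g x = 0) : (reflection hf * reflection hg) ^ 2 = 1 := by
  ext z
  simp only [pow_two, LinearEquiv.mul_apply, reflection_apply, map_sub, map_smul, hf, hg, hfy, hgx,
    LinearEquiv.coe_one, id]
  module

variable {I : Type*} (M : CoxeterMatrix I)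

/-- The linear form `2 B(αᵢ, ·)`, where `αⱼ = single j 1` are the simple roots and `B` is the
bilinear form of the geometric representation. The convention `π / 0 = 0` gives the standard value
`B(αᵢ, αⱼ) = -1` when `M i j = 0` encodes an infinite order. -/
noncomputable def simpleCoroot (i : I) : Dual ℝ (I →₀ ℝ) :=
  Finsupp.linearCombination ℝ fun j ↦ -2 * cos (π / M i j)

theorem simpleCoroot_single (i j : I) :
    simpleCoroot M i (Finsupp.single j 1) = -2 * cos (π / M i j) := by
  simp [simpleCoroot]

theorem simpleCoroot_self (i : I) : simpleCoroot M i (Finsupp.single i 1) = 2 := by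
  simp [simpleCoroot_single]

/-- The image of the `i`-th simple reflection in the geometric representation. -/
noncomputable def geometricReflection (i : I) : (I →₀ ℝ) ≃ₗ[ℝ] (I →₀ ℝ) :=
  reflection (simpleCoroot_self M i)

theorem isLiftable_geometricReflection : M.IsLiftable (geometricReflection M) := by
  intro i j
  rcases eq_or_ne i j with rfl | hij
  · rw [M.diagonal, pow_one]
    ext1 v
    exact involutive_reflection (simpleCoroot_self M i) v
  have ne_one : M i j ≠ 1 := M.off_diagonal i j hij
  rcases (by omega : M i j = 0 ∨ M i j = 2 ∨ 3 ≤ M i j) with h | h | h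
  · rw [h, pow_zero]
  · rw [h]
    apply reflection_mul_reflection_sq_eq_one <;>
      simp [simpleCoroot_single, M.symmetric j i, h]
  · apply reflection_mul_reflection_pow_eq_one _ _ h
    rw [simpleCoroot_single, simpleCoroot_single, M.symmetric j i]
    ring

theorem simple_injective {W : Type*} [Group W] {M : CoxeterMatrix I} (cs : CoxeterSystem M W) :
    Function.Injective cs.simple := by
  intro i j h
  by_contra hij
  have geometricReflection_eq : geometricReflection M i = geometricReflection M j := by
    simpa only [cs.lift_apply_simple] using
      congrArg (cs.lift ⟨_, isLiftable_geometricReflection M⟩) h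
  have coord_eq := congrArg (fun r ↦ r (Finsupp.single i 1) i) geometricReflection_eq
  norm_num [geometricReflection, reflection_apply, hij] at coord_eq

end GeometricRepresentation

section DiagramInvolution

variable {I W : Type*} [Group W] {M : CoxeterMatrix I} (cs : CoxeterSystem M W)
  {σ : I → I} {θ : W →* W}

theorem simple_ne_simple_of_eq_two {i j : I} (h : M i j = 2) : cs.simple i ≠ cs.simple j := by
  refine (simple_injective cs).ne ?_
  rintro rfl
  simp at h

theorem commute_simple_of_eq_two {i j : I} (h : M i j = 2) :
    Commute (cs.simple i) (cs.simple j) := by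
  have hsq := cs.simple_mul_simple_pow i j
  rw [h, pow_two] at hsq
  rw [Commute, SemiconjBy, eq_inv_of_mul_eq_one_left hsq, mul_inv_rev, inv_simple, inv_simple]

theorem map_map (hσ : Function.Involutive σ) (hθ : ∀ i, θ (cs.simple i) = cs.simple (σ i))
    (w : W) : θ (θ w) = w := by
  have : θ.comp θ = MonoidHom.id W := cs.ext_simple fun i ↦ by simp [hθ, hσ i]
  exact DFunLike.congr_fun this w

theorem length_map_le (hθ : ∀ i, θ (cs.simple i) = cs.simple (σ i)) (w : W) :
    cs.length (θ w) ≤ cs.length w := by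
  obtain ⟨ω, hω, rfl⟩ := cs.exists_isReduced w
  have map_wordProd : θ (cs.wordProd ω) = cs.wordProd (ω.map σ) := by
    simp [wordProd, map_list_prod, Function.comp_def, hθ]
  simpa [map_wordProd, hω.eq] using cs.length_wordProd_le (ω.map σ)

theorem length_map (hσ : Function.Involutive σ) (hθ : ∀ i, θ (cs.simple i) = cs.simple (σ i))
    (w : W) : cs.length (θ w) = cs.length w :=
  (length_map_le cs hθ w).antisymm (by simpa [map_map cs hσ hθ] using length_map_le cs hθ (θ w))

theorem isRightDescent_map_iff (hσ : Function.Involutive σ)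
    (hθ : ∀ i, θ (cs.simple i) = cs.simple (σ i)) {w : W} {i : I} :
    cs.IsRightDescent (θ w) (σ i) ↔ cs.IsRightDescent w i := by
  rw [IsRightDescent, ← hθ, ← map_mul, length_map cs hσ hθ, length_map cs hσ hθ, IsRightDescent]

theorem map_simple_conj_eq (hσ : Function.Involutive σ)
    (hθ : ∀ i, θ (cs.simple i) = cs.simple (σ i)) {t : W} {i : I}
    (hcomm : Commute (cs.simple i) (cs.simple (σ i))) (hfix : θ t = t)
    (hconj : t * cs.simple (σ i) * t⁻¹ = cs.simple i) :
    θ (cs.simple i * t * cs.simple i) = cs.simple i * t * cs.simple i := by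
  have mul_simple_map : t * cs.simple (σ i) = cs.simple i * t := mul_inv_eq_iff_eq_mul.mp hconj
  have mul_simple : t * cs.simple i = cs.simple (σ i) * t := by
    simpa only [map_mul, hθ, hσ i, hfix] using congrArg θ mul_simple_map
  calc θ (cs.simple i * t * cs.simple i)
      = cs.simple (σ i) * (t * cs.simple (σ i)) := by simp only [map_mul, hθ, hfix, mul_assoc]
    _ = cs.simple (σ i) * cs.simple i * t := by rw [mul_simple_map, mul_assoc]
    _ = cs.simple i * (cs.simple (σ i) * t) := by rw [← hcomm.eq, mul_assoc]
    _ = cs.simple i * t * cs.simple i := by rw [← mul_simple, mul_assoc]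

theorem map_ne_of_isReflection (hσ : Function.Involutive σ) (hedge : ∀ i, M i (σ i) = 2)
    (hθ : ∀ i, θ (cs.simple i) = cs.simple (σ i)) {t : W} (ht : cs.IsReflection t) :
    θ t ≠ t := by
  induction h : cs.length t using Nat.strong_induction_on generalizing t with
  | _ n ih
  subst h
  intro hfix
  have ne_one : t ≠ 1 := by
    rintro rfl
    simpa using ht.odd_length
  obtain ⟨i, hi⟩ := cs.exists_rightDescent_of_ne_one ne_one
  have hσi : cs.IsRightDescent t (σ i) := by
    rwa [← isRightDescent_map_iff cs hσ hθ, hfix] at hi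
  have hcomm : Commute (cs.simple i) (cs.simple (σ i)) := commute_simple_of_eq_two cs (hedge i)
  have simple_ne : cs.simple (σ i) ≠ cs.simple i := (simple_ne_simple_of_eq_two cs (hedge i)).symm
  have ne_simple : cs.simple i ≠ t := by
    rintro rfl
    exact simple_ne (hθ i ▸ hfix)
  have conj_isReflection : cs.IsReflection (cs.simple i * t * cs.simple i) := by
    simpa using ht.conj (cs.simple i)
  have length_conj := length_simple_conj cs ht hi ne_simple
  by_cases hconj : t * cs.simple (σ i) * t⁻¹ = cs.simple i
  · exact ih _ (by omega) conj_isReflection rfl (map_simple_conj_eq cs hσ hθ hcomm hfix hconj)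
  · have length_conj_mul : cs.length (cs.simple i * t * cs.simple i * cs.simple (σ i)) < _ :=
      isRightDescent_simple_conj cs simple_ne hcomm hσi hconj
    set p := cs.simple (σ i) * cs.simple i with hp
    have map_p : θ p = p := by rw [hp, map_mul, hθ, hθ, hσ, hcomm.eq]
    have p_conj_eq : p * t * p⁻¹ =
        cs.simple (σ i) * (cs.simple i * t * cs.simple i * cs.simple (σ i)) := by
      simp [hp, mul_assoc]
    refine ih _ ?_ (ht.conj p) rfl (by rw [map_mul, map_mul, map_inv, map_p, hfix])
    have := cs.length_mul_le (cs.simple (σ i)) (cs.simple i * t * cs.simple i * cs.simple (σ i))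
    rw [cs.length_simple] at this
    rw [p_conj_eq]
    omega

theorem isReflection_mul_ne (hσ : Function.Involutive σ) (hedge : ∀ i, M i (σ i) = 2)
    (hθ : ∀ i, θ (cs.simple i) = cs.simple (σ i)) {t : W} (ht : cs.IsReflection t) (w : W) :
    t * (w * (θ w)⁻¹) ≠ w * (θ w)⁻¹ * θ t := by
  intro h
  have conj_isReflection : cs.IsReflection (w⁻¹ * t * w) := by simpa using ht.conj w⁻¹
  refine map_ne_of_isReflection cs hσ hedge hθ conj_isReflection ?_
  have h := congrArg (fun x ↦ w⁻¹ * x * θ w) h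
  simpa [mul_assoc] using h.symm

theorem length_eq_two_mul_length_simple_mul (hθ : ∀ i, θ (cs.simple i) = cs.simple (σ i)) {u w : W}
    {i : I} (hu : u = cs.simple i * w * (θ (cs.simple i * w))⁻¹)
    (hlen : cs.length u = 2 * cs.length w + 2) :
    cs.length u = 2 * cs.length (cs.simple i * w) := by
  have length_le := cs.length_mul_le (cs.simple i * w) (θ (cs.simple i * w))⁻¹
  rw [← hu, cs.length_inv] at length_le
  have := length_map_le cs hθ (cs.simple i * w)
  have := cs.length_simple_mul w i
  omega

theorem exists_eq_mul_inv_map (hσ : Function.Involutive σ) (hedge : ∀ i, M i (σ i) = 2)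
    (hθ : ∀ i, θ (cs.simple i) = cs.simple (σ i)) {u : W} (hu : θ u = u⁻¹) :
    ∃ w : W, u = w * (θ w)⁻¹ ∧ cs.length u = 2 * cs.length w := by
  induction h : cs.length u using Nat.strong_induction_on generalizing u with
  | _ n ih
  subst h
  rcases eq_or_ne u 1 with rfl | ne_one
  · exact ⟨1, by simp⟩
  obtain ⟨i, hi⟩ := cs.exists_leftDescent_of_ne_one ne_one
  have hσi : cs.IsRightDescent u (σ i) := by
    rwa [← isRightDescent_inv_iff, ← isRightDescent_map_iff cs hσ hθ, map_inv, hu, inv_inv] at hi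
  by_cases hconj : cs.simple i * u * cs.simple (σ i) = u
  · have simple_mul : cs.simple i * u = u * cs.simple (σ i) := by
      conv_rhs => rw [← hconj, simple_mul_simple_cancel_right]
    have map_simple_mul : θ (cs.simple i * u) = (cs.simple i * u)⁻¹ := by
      rw [simple_mul, map_mul, hu, hθ, hσ, ← simple_mul, mul_inv_rev, inv_simple]
    obtain ⟨w, hw, -⟩ := ih _ hi map_simple_mul rfl
    refine absurd ?_ (isReflection_mul_ne cs hσ hedge hθ (cs.isReflection_simple i) w)
    rw [← hw, hθ, hconj, simple_mul_simple_cancel_left]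
  · have length_conj := length_simple_mul_mul_simple cs hi hσi hconj
    have map_conj : θ (cs.simple i * u * cs.simple (σ i)) =
        (cs.simple i * u * cs.simple (σ i))⁻¹ := by
      simp [hu, hθ, hσ i, mul_assoc]
    obtain ⟨w, hw, hlen⟩ := ih _ (by omega) map_conj rfl
    have eq_mul : u = cs.simple i * w * (θ (cs.simple i * w))⁻¹ := by
      have h := congrArg (fun x ↦ cs.simple i * x * cs.simple (σ i)) hw
      simpa [hθ, mul_assoc] using h
    exact ⟨_, eq_mul, length_eq_two_mul_length_simple_mul cs hθ eq_mul (by omega)⟩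

end DiagramInvolution

end TwistedInvolution

theorem twisted_involutions_eq_twisted_conjugates_general
    {I W : Type*} [Group W] (M : CoxeterMatrix I) (cs : CoxeterSystem M W)
    (σ : I → I) (hσ : Function.Involutive σ) (hnoedge : ∀ i : I, M i (σ i) = 2)
    (θ : W →* W) (hθ : ∀ i : I, θ (cs.simple i) = cs.simple (σ i)) :
    (∀ u : W, θ u = u⁻¹ →
      ∃ w : W, u = w * (θ w)⁻¹ ∧ cs.length u = 2 * cs.length w)
    ∧ {u : W | θ u = u⁻¹} = {u : W | ∃ w : W, u = w * (θ w)⁻¹} := by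
  have exists_eq (u : W) (hu : θ u = u⁻¹) :=
    TwistedInvolution.exists_eq_mul_inv_map cs hσ hnoedge hθ hu
  refine ⟨exists_eq, Set.ext fun u ↦ ⟨fun hu ↦ ?_, ?_⟩⟩
  · obtain ⟨w, hw, -⟩ := exists_eq u hu
    exact ⟨w, hw⟩
  · rintro ⟨w, rfl⟩
    simp [TwistedInvolution.map_map cs hσ hθ]

/-- Let `M` be a 3-spherical Coxeter matrix on a finite index set, `σ` an involutive diagram
automorphism of `M` with no fixed vertices and no fixed edges, and `θ` the induced group
automorphism of the Coxeter group `W` with `θ (s i) = s (σ i)`. Then every `u ∈ W` with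
`θ u = u⁻¹` can be written as `u = w * (θ w)⁻¹` with `ℓ u = 2 * ℓ w`; in particular,
`{u | θ u = u⁻¹} = {w * (θ w)⁻¹ | w ∈ W}`. -/
theorem twisted_involutions_eq_twisted_conjugates
    {I : Type*} [Finite I] {W : Type*} [Group W]
    (M : CoxeterMatrix I) (cs : CoxeterSystem M W)
    (hsph : ∀ J : Finset I, J.card ≤ 3 →
      Finite ↥(Subgroup.closure (cs.simple '' (J : Set I))))
    (σ : I → I) (hbij : Function.Bijective σ)
    (hinv : σ ∘ σ = id)
    (hM : ∀ i j : I, M (σ i) (σ j) = M i j)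
    (hnovertex : ∀ i : I, σ i ≠ i)
    (hnoedge : ∀ i : I, M i (σ i) = 2)
    (θ : W →* W) (hθ : ∀ i : I, θ (cs.simple i) = cs.simple (σ i)) :
    (∀ u : W, θ u = u⁻¹ →
      ∃ w : W, u = w * (θ w)⁻¹ ∧ cs.length u = 2 * cs.length w)
    ∧ {u : W | θ u = u⁻¹} = {u : W | ∃ w : W, u = w * (θ w)⁻¹} := by
  exact twisted_involutions_eq_twisted_conjugates_general M cs σ (congrFun hinv) hnoedge θ hθ
end

section
/- Let n ≥ 3, let M_n be the Coxeter matrix on an index set I with |I| = n defined by M_n(i,i) = 1 and M_n(i,j) = 4 for all i ≠ j, let W'_n be the associated Coxeter group and ℓ its length function. Then for every real number t with 0 ≤ t ≤ 1/n, the family (t^{ℓ(w)})_{w ∈ W'_n} is summable and Σ_{w ∈ W'_n} t^{ℓ(w)} = 2(1+t)(1+t+t²+t³) / (2(1−(n−1)t)(1+t+t²+t³) + n(n−1)t⁴). -/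
/-!
Let `D(w)` be the set of right descents of `w`. Since `D(w) = ∅` only for `w = 1`,
`∑_{J ⊆ D(w)} (-1)^|J|` is `1` for `w = 1` and `0` otherwise, so that
`∑_J (-1)^|J| P_J = 1`, where `P_J` is the sum of `t ^ ℓ(w)` over all `w` with `J ⊆ D(w)`.

When every off-diagonal label is the same `m ≥ 3`, no two generators commute, which forces
`|D(w)| ≤ 2`, so only `|J| ≤ 2` matters. Right multiplication by `s_i` exchanges the elements with
and without descent `i` and changes the length by `1`, so `(1 + t) P_i = t P`. Right multiplication
by the longest element of `⟨s_i, s_j⟩` exchanges the elements having both `i` and `j` as descents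
with those having neither, and changes the length by `m`, so
`P_{ij} = t^m (P - P_i - P_j + P_{ij})`. Solving for `P_i` and `P_{ij}` leaves a linear equation
for `P`.

That descents behave this way comes from the cocycle identity for the parity with which a
reflection occurs in the right inversion sequence of a word, a parity depending only on the
element that the word represents.
-/

open CoxeterSystem

theorem prod_map_alternatingWord {B G : Type*} [Monoid G] (f : B → G) (i j : B) (p : ℕ) :
    ((alternatingWord i j (p + p)).map f).prod = (f i * f j) ^ p := by
  induction p with
  | zero => simp [alternatingWord]
  | succ p ih =>
    rw [show p + 1 + (p + 1) = p + p + 1 + 1 by ring, alternatingWord_succ, alternatingWord_succ,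
      pow_succ, ← ih]
    simp

theorem eq_or_eq_of_mem_alternatingWord {B : Type*} {i j k : B} {p : ℕ}
    (h : k ∈ alternatingWord i j p) : k = i ∨ k = j := by
  induction p generalizing i j with
  | zero => simp [alternatingWord] at h
  | succ p ih =>
    rw [alternatingWord_succ, List.concat_eq_append, List.mem_append, List.mem_singleton] at h
    exact h.elim (fun h => (ih h).symm) Or.inr

theorem tsum_subtype_eq_mul_of_equiv {α R : Type*} [DivisionRing R] [TopologicalSpace R]
    [IsTopologicalSemiring R] [T2Space R] {f : α → R} {S T : Set α} (e : α ≃ α) (c : R)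
    (mem_iff : ∀ x, e x ∈ T ↔ x ∈ S) (apply_eq : ∀ x ∈ S, f (e x) = c * f x) :
    ∑' x : T, f x = c * ∑' x : S, f x := by
  rw [← tsum_mul_left, ← (e.subtypeEquiv fun x => (mem_iff x).symm).tsum_eq]
  exact tsum_congr fun x => apply_eq x x.2

theorem tsum_union_add_tsum_inter {α E : Type*} [AddCommGroup E] [UniformSpace E]
    [IsUniformAddGroup E] [CompleteSpace E] [T2Space E] {f : α → E} (hf : Summable f)
    (S T : Set α) :
    ∑' x : ↥(S ∪ T), f x + ∑' x : ↥(S ∩ T), f x = ∑' x : S, f x + ∑' x : T, f x := by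
  simp_rw [tsum_subtype]
  rw [← (hf.indicator _).tsum_add (hf.indicator _), ← (hf.indicator _).tsum_add (hf.indicator _)]
  exact tsum_congr fun x => congrFun (Set.indicator_union_add_inter f S T) x

section Descents

variable {B W : Type*} [Group W] {M : CoxeterMatrix B} (cs : CoxeterSystem M W)

theorem rightInvSeq_alternatingWord (i j : B) (p : ℕ) :
    cs.rightInvSeq (alternatingWord i j p) =
      ((List.range p).map fun q => cs.simple j * (cs.simple i * cs.simple j) ^ q).reverse := by
  induction p generalizing i j with
  | zero => rfl
  | succ p ih =>
    have semiconj : SemiconjBy (cs.simple j) (cs.simple i * cs.simple j)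
        (cs.simple j * cs.simple i) := by simp [SemiconjBy, mul_assoc]
    rw [alternatingWord_succ, rightInvSeq_concat, ih, List.range_succ_eq_map]
    simp [← List.map_reverse, List.map_map, Function.comp_def, pow_succ', mul_assoc,
      ← (semiconj.pow_right _).eq]

open Classical in
theorem even_count_rightInvSeq_alternatingWord (i j : B) (x : W) :
    Even ((cs.rightInvSeq (alternatingWord i j (M i j + M i j))).count x) := by
  rw [rightInvSeq_alternatingWord, List.count_reverse, List.range_add, List.map_append,
    List.map_map, List.count_append]
  simp [Function.comp_def, pow_add]

open Classical in
/-- The action of the simple reflection `i` on signed reflections (Björner–Brenti, §1.3):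
conjugation of the reflection, with the sign flipped exactly at `i` itself. Signs are written
additively in `ZMod 2`, and the same formula is used on all of `W`. -/
noncomputable def signedConj (i : B) : Function.End (W × ZMod 2) :=
  fun p => (cs.simple i * p.1 * cs.simple i, p.2 + if p.1 = cs.simple i then 1 else 0)

open Classical in
theorem prod_map_signedConj_apply (ω : List B) (p : W × ZMod 2) :
    (ω.map (signedConj cs)).prod p =
      (cs.wordProd ω * p.1 * (cs.wordProd ω)⁻¹, p.2 + (cs.rightInvSeq ω).count p.1) := by
  induction ω with
  | nil => simp [Function.End.one_def]
  | cons i ω ih =>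
    have conj_eq_iff : cs.wordProd ω * p.1 * (cs.wordProd ω)⁻¹ = cs.simple i ↔
        (cs.wordProd ω)⁻¹ * cs.simple i * cs.wordProd ω = p.1 := by
      rw [mul_inv_eq_iff_eq_mul, mul_assoc, inv_mul_eq_iff_eq_mul, eq_comm]
    rw [List.map_cons, List.prod_cons]
    change signedConj cs i ((ω.map (signedConj cs)).prod p) = _
    rw [ih]
    simp [signedConj, rightInvSeq, List.count_cons, wordProd_cons, conj_eq_iff,
      ← mul_assoc, add_assoc]

theorem isLiftable_signedConj : M.IsLiftable (signedConj cs) := by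
  classical
  intro i j
  funext p
  rw [← prod_map_alternatingWord, prod_map_signedConj_apply,
    (ZMod.natCast_eq_zero_iff_even).2 (even_count_rightInvSeq_alternatingWord cs i j p.1)]
  have : cs.wordProd (alternatingWord i j (M i j + M i j)) = 1 := by
    rw [wordProd, prod_map_alternatingWord, simple_mul_simple_pow]
  simp [this, Function.End.one_def]

/-- The action of the whole group on signed reflections extending `signedConj`. -/
noncomputable def signedConjHom : W →* Function.End (W × ZMod 2) :=
  cs.lift ⟨signedConj cs, isLiftable_signedConj cs⟩

/-- The parity of the number of occurrences of `x` in the right inversion sequence of any word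
for `w`. It is defined for every `x` in `W`, and is nonzero exactly at the right inversions
of `w`. -/
noncomputable def inversionParity (w x : W) : ZMod 2 :=
  (signedConjHom cs w (x, 0)).2

open Classical in
theorem signedConjHom_wordProd_apply (ω : List B) (p : W × ZMod 2) :
    signedConjHom cs (cs.wordProd ω) p =
      (cs.wordProd ω * p.1 * (cs.wordProd ω)⁻¹, p.2 + (cs.rightInvSeq ω).count p.1) := by
  have comp_simple : signedConjHom cs ∘ cs.simple = signedConj cs :=
    funext <| cs.lift_apply_simple (isLiftable_signedConj cs)
  rw [← prod_map_signedConj_apply, wordProd, map_list_prod, List.map_map, comp_simple]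

open Classical in
theorem inversionParity_wordProd (ω : List B) (x : W) :
    inversionParity cs (cs.wordProd ω) x = (cs.rightInvSeq ω).count x := by
  simp [inversionParity, signedConjHom_wordProd_apply]

theorem signedConjHom_apply (w : W) (p : W × ZMod 2) :
    signedConjHom cs w p = (w * p.1 * w⁻¹, p.2 + inversionParity cs w p.1) := by
  classical
  obtain ⟨ω, rfl⟩ := cs.wordProd_surjective w
  rw [signedConjHom_wordProd_apply, inversionParity_wordProd]

theorem inversionParity_mul (w v x : W) :
    inversionParity cs (w * v) x =
      inversionParity cs v x + inversionParity cs w (v * x * v⁻¹) := by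
  rw [inversionParity, map_mul]
  change (signedConjHom cs w (signedConjHom cs v (x, 0))).2 = _
  rw [signedConjHom_apply cs v, signedConjHom_apply cs w, zero_add]

theorem inversionParity_simple_self (i : B) :
    inversionParity cs (cs.simple i) (cs.simple i) = 1 := by
  classical
  rw [← wordProd_singleton, inversionParity_wordProd]
  simp

theorem length_mul_lt_of_inversionParity_ne_zero {w x : W} (h : inversionParity cs w x ≠ 0) :
    cs.length (w * x) < cs.length w := by
  classical
  obtain ⟨ω, hω, rfl⟩ := cs.exists_isReduced w
  refine (cs.isRightInversion_of_mem_rightInvSeq hω ?_).2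
  contrapose! h
  rw [inversionParity_wordProd, List.count_eq_zero_of_not_mem h, Nat.cast_zero]

theorem inversionParity_mul_simple_self (w : W) (i : B) :
    inversionParity cs (w * cs.simple i) (cs.simple i) =
      inversionParity cs w (cs.simple i) + 1 := by
  rw [inversionParity_mul, inversionParity_simple_self, mul_inv_cancel_right, add_comm]

theorem isRightDescent_iff_inversionParity_ne_zero {w : W} {i : B} :
    cs.IsRightDescent w i ↔ inversionParity cs w (cs.simple i) ≠ 0 := by
  refine ⟨fun h h₀ => ?_, length_mul_lt_of_inversionParity_ne_zero cs⟩
  refine cs.isRightDescent_iff_not_isRightDescent_mul.1 h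
    (length_mul_lt_of_inversionParity_ne_zero cs ?_)
  simp [inversionParity_mul_simple_self, h₀]

theorem isReduced_of_nodup_rightInvSeq {ω : List B} (h : (cs.rightInvSeq ω).Nodup) :
    cs.IsReduced ω := by
  classical
  induction ω using List.reverseRecOn with
  | nil => simp [CoxeterSystem.IsReduced]
  | append_singleton ω i ih =>
    rw [← List.concat_eq_append] at h ⊢
    rw [rightInvSeq_concat, List.nodup_concat, List.nodup_map_iff (MulEquiv.injective _)] at h
    have not_mem : cs.simple i ∉ cs.rightInvSeq ω := fun hi =>
      h.1 (List.mem_map.2 ⟨_, hi, by simp⟩)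
    have not_descent : ¬ cs.IsRightDescent (cs.wordProd ω) i := by
      rw [isRightDescent_iff_inversionParity_ne_zero, inversionParity_wordProd,
        List.count_eq_zero_of_not_mem not_mem, Nat.cast_zero, not_not]
    rw [CoxeterSystem.IsReduced, wordProd_concat, cs.not_isRightDescent_iff.1 not_descent, ih h.2,
      List.length_concat]

theorem length_mul_wordProd_add_length_of_isRightDescent {w : W} {ω : List B} (hω : cs.IsReduced ω)
    (hw : ∀ i ∈ ω, cs.IsRightDescent w i) :
    cs.length (w * cs.wordProd ω) + ω.length = cs.length w := by
  induction ω with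
  | nil => simp
  | cons i ω ih =>
    obtain ⟨hi, hw⟩ := List.forall_mem_cons.1 hw
    have hω' : cs.IsReduced ω := hω.drop 1
    have not_descent : ¬ cs.IsRightDescent (cs.wordProd ω)⁻¹ i := by
      rw [isRightDescent_inv_iff, not_isLeftDescent_iff, ← wordProd_cons, hω, hω',
        List.length_cons]
    have parity : inversionParity cs (w * cs.wordProd ω)
        ((cs.wordProd ω)⁻¹ * cs.simple i * cs.wordProd ω) ≠ 0 := by
      have h := inversionParity_mul cs (w * cs.wordProd ω) (cs.wordProd ω)⁻¹ (cs.simple i)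
      rw [isRightDescent_iff_inversionParity_ne_zero, not_not] at not_descent
      rw [mul_inv_cancel_right, inv_inv, not_descent, zero_add] at h
      exact h ▸ (isRightDescent_iff_inversionParity_ne_zero cs).1 hi
    have lower := length_mul_lt_of_inversionParity_ne_zero cs parity
    have upper := cs.length_le_length_mul_add_right w (cs.wordProd (i :: ω))
    rw [show w * cs.wordProd ω * ((cs.wordProd ω)⁻¹ * cs.simple i * cs.wordProd ω) =
      w * cs.wordProd (i :: ω) by rw [wordProd_cons]; group] at lower
    rw [hω.eq] at upper
    specialize ih hω' hw
    simp only [List.length_cons] at upper ⊢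
    lia

theorem isReduced_alternatingWord_of_le_orderOf {i j : B} {p : ℕ}
    (hp : p ≤ orderOf (cs.simple i * cs.simple j)) : cs.IsReduced (alternatingWord i j p) := by
  refine isReduced_of_nodup_rightInvSeq cs ?_
  rw [rightInvSeq_alternatingWord, List.nodup_reverse]
  refine List.nodup_range.map_on fun q hq r hr h => ?_
  rw [List.mem_range] at hq hr
  exact pow_injOn_Iio_orderOf (hq.trans_le hp) (hr.trans_le hp) (mul_left_cancel h)

theorem wordProd_braidWord_mul_simple {i j : B} (h₀ : M i j ≠ 0) :
    cs.wordProd (braidWord M i j) * cs.simple j =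
      cs.simple (if Even (M i j) then j else i) * cs.wordProd (braidWord M i j) := by
  obtain ⟨p, hp⟩ := Nat.exists_eq_add_one_of_ne_zero h₀
  conv_rhs => rw [wordProd_braidWord_eq]
  rw [braidWord, braidWord, M.symmetric j i, hp, alternatingWord_succ,
    alternatingWord_succ', wordProd_concat, wordProd_cons, simple_mul_simple_cancel_right]
  by_cases hp' : Even p <;> simp [Nat.even_add_one, hp']

theorem isRightDescent_wordProd_braidWord {i j : B} (h₀ : M i j ≠ 0)
    (h : orderOf (cs.simple i * cs.simple j) = M i j) :
    cs.IsRightDescent (cs.wordProd (braidWord M i j)) j := by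
  obtain ⟨p, hp⟩ := Nat.exists_eq_add_one_of_ne_zero h₀
  rw [CoxeterSystem.IsRightDescent, isReduced_alternatingWord_of_le_orderOf cs h.ge, braidWord, hp,
    length_alternatingWord, alternatingWord_succ, wordProd_concat,
    simple_mul_simple_cancel_right]
  exact (cs.length_wordProd_le _).trans_lt (by simp)

theorem isRightDescent_mul_wordProd_braidWord_iff {i j : B} (h₀ : M i j ≠ 0)
    (h : orderOf (cs.simple i * cs.simple j) = M i j) {w : W} :
    cs.IsRightDescent (w * cs.wordProd (braidWord M i j)) j ↔
      ¬ cs.IsRightDescent w (if Even (M i j) then j else i) := by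
  have parity_braid := (isRightDescent_iff_inversionParity_ne_zero cs).1
    (isRightDescent_wordProd_braidWord cs h₀ h)
  rw [isRightDescent_iff_inversionParity_ne_zero, isRightDescent_iff_inversionParity_ne_zero,
    inversionParity_mul, wordProd_braidWord_mul_simple cs h₀, mul_inv_cancel_right]
  revert parity_braid
  generalize inversionParity cs _ _ = a, inversionParity cs _ _ = b
  revert a b
  decide

theorem isRightDescent_pair_mul_wordProd_braidWord_iff {i j : B} (h₀ : M i j ≠ 0)
    (h : orderOf (cs.simple i * cs.simple j) = M i j) {w : W} :
    (cs.IsRightDescent (w * cs.wordProd (braidWord M i j)) i ∧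
      cs.IsRightDescent (w * cs.wordProd (braidWord M i j)) j) ↔
      ¬ cs.IsRightDescent w i ∧ ¬ cs.IsRightDescent w j := by
  have h' : orderOf (cs.simple j * cs.simple i) = M j i := by
    rw [M.symmetric, ← h, ← orderOf_inv, mul_inv_rev, inv_simple, inv_simple]
  have hi := isRightDescent_mul_wordProd_braidWord_iff cs (M.symmetric i j ▸ h₀) h' (w := w)
  rw [wordProd_braidWord_eq, M.symmetric] at hi
  rw [hi, isRightDescent_mul_wordProd_braidWord_iff cs h₀ h]
  split_ifs
  · rfl
  · exact and_comm

theorem length_mul_wordProd_braidWord {i j : B} (h₀ : M i j ≠ 0)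
    (h : orderOf (cs.simple i * cs.simple j) = M i j) {w : W}
    (hi : ¬ cs.IsRightDescent w i) (hj : ¬ cs.IsRightDescent w j) :
    cs.length (w * cs.wordProd (braidWord M i j)) = cs.length w + M i j := by
  obtain ⟨hi', hj'⟩ := (isRightDescent_pair_mul_wordProd_braidWord_iff cs h₀ h).2 ⟨hi, hj⟩
  have reduced := (isReduced_alternatingWord_of_le_orderOf cs h.ge).reverse
  have length_eq := length_mul_wordProd_add_length_of_isRightDescent cs reduced
    (w := w * cs.wordProd (braidWord M i j)) fun k hk =>
      (eq_or_eq_of_mem_alternatingWord (List.mem_reverse.1 hk)).elim (· ▸ hi') (· ▸ hj')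
  rw [wordProd_reverse, mul_inv_cancel_right, List.length_reverse,
    length_alternatingWord] at length_eq
  exact length_eq.symm

theorem isReduced_of_not_commute {i j : B} (hij : ¬ Commute (cs.simple i) (cs.simple j)) :
    cs.IsReduced [i, j, i] := by
  have mul_ne_one : cs.simple j * cs.simple i ≠ 1 := fun h =>
    hij ((mul_eq_one_iff_eq_inv.1 h).trans (cs.inv_simple i) ▸ Commute.refl _)
  have mul_self_ne_one : cs.simple j * cs.simple i * (cs.simple j * cs.simple i) ≠ 1 := fun h => by
    rw [mul_eq_one_iff_eq_inv, mul_inv_rev, inv_simple, inv_simple] at h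
    exact hij h.symm
  refine isReduced_of_nodup_rightInvSeq cs ?_
  rw [show [i, j, i] = alternatingWord j i 3 from rfl, rightInvSeq_alternatingWord]
  simp [List.range_succ, mul_ne_one, mul_self_ne_one, sq]

theorem isRightDescent_mul_simple_of_not_commute {i j : B} {w : W}
    (hij : ¬ Commute (cs.simple i) (cs.simple j))
    (hi : cs.IsRightDescent w i) (hj : cs.IsRightDescent w j) :
    cs.IsRightDescent (w * cs.simple i) j ∧
      cs.IsRightDescent (w * cs.simple i * cs.simple j) i := by
  have reduced : cs.IsReduced [i, j, i] := isReduced_of_not_commute cs hij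
  have length_add_three := length_mul_wordProd_add_length_of_isRightDescent cs reduced (w := w)
    (by simp [hi, hj])
  have length_add_one := cs.isRightDescent_iff.1 hi
  have length₂ := cs.length_mul_simple (w * cs.simple i) j
  have length₃ := cs.length_mul_simple (w * cs.simple i * cs.simple j) i
  simp only [wordProd_cons, wordProd_nil, mul_one, ← mul_assoc, List.length_cons,
    List.length_nil] at length_add_three
  rw [isRightDescent_iff, isRightDescent_iff]
  lia

theorem not_isRightDescent_mul_simple_of_pair
    (hM : ∀ i j, i ≠ j → ¬ Commute (cs.simple i) (cs.simple j)) {i j k : B}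
    (hij : i ≠ j) (hjk : j ≠ k) (hki : k ≠ i) {w : W}
    (hi : cs.IsRightDescent w i) (hj : cs.IsRightDescent w j) :
    ¬ cs.IsRightDescent (w * cs.simple i) k := by
  induction hn : cs.length w using Nat.strong_induction_on generalizing w i j k with
  | _ n ih =>
    subst hn
    intro hk
    -- Otherwise `j`, `k`, `i` and the shorter element `w s_i` satisfy the same hypotheses.
    obtain ⟨hj', hi'⟩ := isRightDescent_mul_simple_of_not_commute cs (hM i j hij) hi hj
    exact ih _ hi hjk hki hij hj' hk rfl hi'

theorem card_le_two_of_isRightDescent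
    (hM : ∀ i j, i ≠ j → ¬ Commute (cs.simple i) (cs.simple j)) {w : W} {J : Finset B}
    (hJ : ∀ i ∈ J, cs.IsRightDescent w i) : J.card ≤ 2 := by
  by_contra! hcard
  obtain ⟨i, j, k, hi, hj, hk, hij, hik, hjk⟩ := Finset.two_lt_card_iff.1 hcard
  exact not_isRightDescent_mul_simple_of_pair cs hM hij hjk hik.symm (hJ i hi) (hJ j hj)
    (isRightDescent_mul_simple_of_not_commute cs (hM i k hik) (hJ i hi) (hJ k hk)).1

theorem orderOf_simple_mul_simple {i j : B} (hij : i ≠ j)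
    (h : ∀ k, k ≠ j → M i j ∣ M k j) :
    orderOf (cs.simple i * cs.simple j) = M i j := by
  classical
  let f : B → DihedralGroup (M i j) := fun k => if k = j then .sr 1 else .sr 0
  have hf : M.IsLiftable f := by
    intro k l
    by_cases hk : k = j <;> by_cases hl : l = j
    · simp [f, hk, hl]
    · obtain ⟨c, hc⟩ := h l hl
      simp [f, hk, hl, M.symmetric j l, hc]
    · obtain ⟨c, hc⟩ := h k hk
      simp [f, hk, hl, hc]
    · simp [f, hk, hl]
  refine Nat.dvd_antisymm (orderOf_dvd_of_pow_eq_one (cs.simple_mul_simple_pow i j)) ?_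
  have := orderOf_map_dvd (cs.lift ⟨f, hf⟩) (cs.simple i * cs.simple j)
  rw [map_mul, cs.lift_apply_simple, cs.lift_apply_simple] at this
  simpa [f, hij] using this

end Descents

section PoincareSeries

variable {B W : Type*} [Group W] {M : CoxeterMatrix B} (cs : CoxeterSystem M W)

theorem finite_setOf_length_eq [Finite B] (k : ℕ) : {w | cs.length w = k}.Finite := by
  refine ((List.finite_length_eq B k).image cs.wordProd).subset fun w hw => ?_
  obtain ⟨ω, hω, rfl⟩ := cs.exists_isReduced w
  exact ⟨ω, hω.symm.trans hw, rfl⟩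

theorem ncard_setOf_length_eq_succ_le [Fintype B] {k : ℕ} (hk : k ≠ 0) :
    {w | cs.length w = k + 1}.ncard ≤ {w | cs.length w = k}.ncard * (Fintype.card B - 1) := by
  classical
  have hfin := finite_setOf_length_eq cs
  let ascents : W → Finset B := fun v => {i | ¬ cs.IsRightDescent v i}
  have cover : (hfin (k + 1)).toFinset ⊆
      (hfin k).toFinset.biUnion fun v => (ascents v).image (v * cs.simple ·) := by
    intro w hw
    rw [Set.Finite.mem_toFinset, Set.mem_ofPred_eq] at hw
    obtain ⟨i, hi⟩ := cs.exists_rightDescent_of_ne_one (w := w) (by rintro rfl; simp at hw)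
    have length_eq := cs.isRightDescent_iff.1 hi
    simp only [Finset.mem_biUnion, Set.Finite.mem_toFinset, Set.mem_ofPred_eq, Finset.mem_image,
      ascents, Finset.mem_filter_univ]
    exact ⟨w * cs.simple i, by lia, i, cs.isRightDescent_iff_not_isRightDescent_mul.1 hi, by simp⟩
  have card_ascents_le : ∀ v ∈ (hfin k).toFinset,
      ((ascents v).image (v * cs.simple ·)).card ≤ Fintype.card B - 1 := by
    intro v hv
    rw [Set.Finite.mem_toFinset, Set.mem_ofPred_eq] at hv
    obtain ⟨i, hi⟩ := cs.exists_rightDescent_of_ne_one (w := v) (by rintro rfl; simp at hv; lia)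
    have not_mem : i ∉ ascents v := by simpa [ascents] using hi
    exact Finset.card_image_le.trans (Nat.le_sub_one_of_lt (Finset.card_lt_univ_of_notMem not_mem))
  rw [Set.ncard_eq_toFinset_card _ (hfin _), Set.ncard_eq_toFinset_card _ (hfin _)]
  exact (Finset.card_le_card cover).trans (Finset.card_biUnion_le_card_mul _ _ _ card_ascents_le)

theorem summable_pow_length [Fintype B] {t : ℝ} (ht₀ : 0 ≤ t)
    (ht₁ : ((Fintype.card B : ℝ) - 1) * t < 1) : Summable fun w => t ^ cs.length w := by
  have ratio_lt_one : ((Fintype.card B - 1 : ℕ) : ℝ) * t < 1 := by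
    rcases Nat.eq_zero_or_pos (Fintype.card B) with h | h
    · simp [h]
    · rwa [Nat.cast_pred h]
  have tsum_fiber (k : ℕ) : ∑' w : {w | cs.length w = k}, t ^ cs.length (w : W) =
      {w | cs.length w = k}.ncard * t ^ k := by
    rw [tsum_congr fun w : {w | cs.length w = k} => congrArg (t ^ ·) w.2, tsum_const,
      nsmul_eq_mul, Nat.card_coe_set_eq]
  have ratio_bound {k : ℕ} (hk : k ≠ 0) : {w | cs.length w = k + 1}.ncard * t ^ (k + 1) ≤
      ((Fintype.card B - 1 : ℕ) * t) * ({w | cs.length w = k}.ncard * t ^ k) := by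
    calc ({w | cs.length w = k + 1}.ncard : ℝ) * t ^ (k + 1)
        ≤ ({w | cs.length w = k}.ncard * (Fintype.card B - 1 : ℕ)) * t ^ (k + 1) := by
          gcongr
          exact_mod_cast ncard_setOf_length_eq_succ_le cs hk
      _ = _ := by ring
  refine (summable_partition (fun w => pow_nonneg ht₀ _) (s := fun k => {w | cs.length w = k})
    fun w => ⟨cs.length w, rfl, fun _ h => h.symm⟩).2 ⟨fun k => ?_, ?_⟩
  · have := (finite_setOf_length_eq cs k).to_subtype
    exact Summable.of_finite
  · simp_rw [tsum_fiber]
    refine summable_of_ratio_norm_eventually_le ratio_lt_one ?_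
    filter_upwards [Filter.eventually_ne_atTop 0] with k hk
    rw [Real.norm_of_nonneg (by positivity), Real.norm_of_nonneg (by positivity)]
    exact ratio_bound hk

/-- The elements of a Coxeter group having every element of `J` as a right descent. -/
def commonDescents (J : Finset B) : Set W := {w | ∀ i ∈ J, cs.IsRightDescent w i}

theorem sum_neg_one_pow_mul_tsum_commonDescents [Fintype B] {f : W → ℝ} (hf : Summable f) :
    ∑ J : Finset B, (-1) ^ J.card * ∑' w : commonDescents cs J, f w = f 1 := by
  classical
  have alternating_sum (w : W) :
      ∑ J : Finset B, (-1) ^ J.card * (commonDescents cs J).indicator f w =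
        if w = 1 then f 1 else 0 := by
    let D : Finset B := {i | cs.IsRightDescent w i}
    have mem_iff (J : Finset B) : w ∈ commonDescents cs J ↔ J ∈ D.powerset := by
      simp [commonDescents, D, Finset.subset_iff]
    have D_eq_empty_iff : D = ∅ ↔ w = 1 := by
      refine ⟨fun h => ?_, fun h => by simp [D, h, CoxeterSystem.IsRightDescent]⟩
      by_contra hw
      obtain ⟨i, hi⟩ := cs.exists_rightDescent_of_ne_one hw
      exact Finset.notMem_empty i (h ▸ (by simpa [D] using hi))
    have alternating_card := congrArg (Int.cast (R := ℝ)) (D.sum_powerset_neg_one_pow_card)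
    push_cast at alternating_card
    simp_rw [Set.indicator_apply, mem_iff, mul_ite, mul_zero]
    rw [Finset.sum_ite_mem, Finset.univ_inter, ← Finset.sum_mul, alternating_card]
    simp only [D_eq_empty_iff, ite_mul, one_mul, zero_mul]
    split_ifs with h
    · rw [h]
    · rfl
  simp_rw [tsum_subtype, ← tsum_mul_left]
  rw [← Summable.tsum_finsetSum fun J _ => (hf.indicator _).mul_left _]
  simp_rw [alternating_sum, tsum_ite_eq]

theorem tsum_commonDescents_singleton {t : ℝ} (ht : Summable fun w => t ^ cs.length w) (i : B) :
    (1 + t) * ∑' w : commonDescents cs {i}, t ^ cs.length w.1 = t * ∑' w, t ^ cs.length w := by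
  have mem_iff (w : W) : w ∈ commonDescents cs {i} ↔ cs.IsRightDescent w i := by
    simp [commonDescents]
  have reindex : ∑' w : commonDescents cs {i}, t ^ cs.length w.1 =
      t * ∑' w : ↥(commonDescents cs {i})ᶜ, t ^ cs.length w.1 := by
    refine tsum_subtype_eq_mul_of_equiv (f := fun w => t ^ cs.length w)
      (Equiv.mulRight (cs.simple i)) t (fun w => ?_) fun w hw => ?_
    · rw [mem_iff, Set.mem_compl_iff, mem_iff]
      exact iff_not_comm.1 cs.isRightDescent_iff_not_isRightDescent_mul
    · rw [Set.mem_compl_iff, mem_iff, not_isRightDescent_iff] at hw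
      rw [Equiv.coe_mulRight, hw, pow_succ']
  rw [add_mul, one_mul, ← ht.tsum_subtype_add_tsum_subtype_compl (commonDescents cs {i}), mul_add,
    ← reindex, add_comm]

theorem tsum_commonDescents_pair [DecidableEq B] {t : ℝ} (ht : Summable fun w => t ^ cs.length w)
    {i j : B} (h₀ : M i j ≠ 0) (h : orderOf (cs.simple i * cs.simple j) = M i j) :
    (1 - t ^ M i j) * ∑' w : commonDescents cs {i, j}, t ^ cs.length w.1 =
      t ^ M i j * (∑' w, t ^ cs.length w - ∑' w : commonDescents cs {i}, t ^ cs.length w.1 -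
        ∑' w : commonDescents cs {j}, t ^ cs.length w.1) := by
  have inter_eq : commonDescents cs {i} ∩ commonDescents cs {j} = commonDescents cs {i, j} := by
    ext w
    simp [commonDescents]
  have reindex : ∑' w : commonDescents cs {i, j}, t ^ cs.length w.1 =
      t ^ M i j * ∑' w : ↥(commonDescents cs {i} ∪ commonDescents cs {j})ᶜ, t ^ cs.length w.1 := by
    refine tsum_subtype_eq_mul_of_equiv (f := fun w => t ^ cs.length w)
      (Equiv.mulRight (cs.wordProd (braidWord M i j))) _ (fun w => ?_) fun w hw => ?_
    · simpa [commonDescents] using isRightDescent_pair_mul_wordProd_braidWord_iff cs h₀ h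
    · simp only [commonDescents, Finset.mem_singleton, forall_eq, Set.mem_compl_iff, Set.mem_union,
        Set.mem_ofPred_eq, not_or] at hw
      rw [Equiv.coe_mulRight, length_mul_wordProd_braidWord cs h₀ h hw.1 hw.2, pow_add, mul_comm]
  have union_inter := tsum_union_add_tsum_inter ht (commonDescents cs {i}) (commonDescents cs {j})
  rw [inter_eq] at union_inter
  rw [← ht.tsum_subtype_add_tsum_subtype_compl (commonDescents cs {i} ∪ commonDescents cs {j})]
  linear_combination reindex - t ^ M i j * union_inter

/-- For the complete Coxeter graph with all labels `m`, the ratio of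
`(1 + t) (1 + t + ⋯ + t ^ (m - 1)) ∑ t ^ ℓ w`, the sum running over all `w` that have `k` prescribed
right descents, to the whole Poincaré series. -/
def descentWeight (m : ℕ) (t : ℝ) : ℕ → ℝ
  | 0 => (1 + t) * ∑ k ∈ Finset.range m, t ^ k
  | 1 => t * ∑ k ∈ Finset.range m, t ^ k
  | 2 => t ^ m
  | _ => 0

theorem descentWeight_of_three_le (m : ℕ) (t : ℝ) {k : ℕ} (hk : 3 ≤ k) :
    descentWeight m t k = 0 := by
  obtain ⟨k, rfl⟩ := Nat.exists_eq_add_of_le' hk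
  rfl

theorem sum_neg_one_pow_mul_descentWeight [Fintype B] (m : ℕ) (t : ℝ) :
    2 * ∑ J : Finset B, (-1) ^ J.card * descentWeight m t J.card =
      2 * (1 - ((Fintype.card B : ℝ) - 1) * t) * (∑ k ∈ Finset.range m, t ^ k) +
        Fintype.card B * ((Fintype.card B : ℝ) - 1) * t ^ m := by
  set n := Fintype.card B
  have group_by_card : ∑ J : Finset B, (-1) ^ J.card * descentWeight m t J.card =
      ∑ k ∈ Finset.range (n + 1), n.choose k • ((-1) ^ k * descentWeight m t k) := by
    rw [← Finset.powerset_univ]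
    exact Finset.sum_powerset_apply_card (fun k => (-1) ^ k * descentWeight m t k)
  have truncate : ∑ k ∈ Finset.range (n + 1), n.choose k • ((-1) ^ k * descentWeight m t k) =
      ∑ k ∈ Finset.range 3, n.choose k • ((-1) ^ k * descentWeight m t k) := by
    refine Finset.sum_congr_of_eq_on_inter (fun k _ hk => ?_) (fun k _ hk => ?_) fun _ _ _ => rfl
    · rw [descentWeight_of_three_le m t (by simpa using hk), mul_zero, smul_zero]
    · rw [Nat.choose_eq_zero_of_lt (by simpa using hk), zero_smul]
  rw [group_by_card, truncate]
  simp only [Finset.sum_range_succ, Finset.sum_range_zero, descentWeight, nsmul_eq_mul,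
    Nat.choose_zero_right, Nat.choose_one_right, Nat.cast_choose_two]
  push_cast
  ring

theorem mul_tsum_commonDescents_eq_descentWeight_mul [Fintype B] {m : ℕ} (hm : 3 ≤ m)
    (hM : ∀ i j, i ≠ j → M i j = m) {t : ℝ} (ht₀ : 0 ≤ t)
    (ht₁ : ((Fintype.card B : ℝ) - 1) * t < 1) (J : Finset B) :
    (1 + t) * (∑ k ∈ Finset.range m, t ^ k) * ∑' w : commonDescents cs J, t ^ cs.length w.1 =
      descentWeight m t J.card * ∑' w, t ^ cs.length w := by
  classical
  have summable := summable_pow_length cs ht₀ ht₁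
  have orderOf_eq {i j : B} (hij : i ≠ j) : orderOf (cs.simple i * cs.simple j) = M i j :=
    orderOf_simple_mul_simple cs hij fun k hk => by rw [hM i j hij, hM k j hk]
  have not_commute (i j : B) (hij : i ≠ j) : ¬ Commute (cs.simple i) (cs.simple j) := fun h => by
    have := orderOf_dvd_of_pow_eq_one (n := 2) (x := cs.simple i * cs.simple j)
      (by rw [h.mul_pow, simple_sq, simple_sq, one_mul])
    rw [orderOf_eq hij, hM i j hij] at this
    exact absurd (Nat.le_of_dvd two_pos this) (by lia)
  obtain h | h | h | h : J.card = 0 ∨ J.card = 1 ∨ J.card = 2 ∨ 3 ≤ J.card := by lia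
  · obtain rfl := Finset.card_eq_zero.1 h
    have : commonDescents cs ∅ = Set.univ := by simp [commonDescents]
    rw [this, tsum_univ (fun w => t ^ cs.length w), h, descentWeight]
  · obtain ⟨i, rfl⟩ := Finset.card_eq_one.1 h
    rw [h, descentWeight, mul_right_comm, tsum_commonDescents_singleton cs summable]
    ring
  · obtain ⟨i, j, hij, rfl⟩ := Finset.card_eq_two.1 h
    have t_ne_one : 1 - t ≠ 0 := by
      have : (2 : ℝ) ≤ Fintype.card B := by exact_mod_cast h ▸ Finset.card_le_univ {i, j}
      nlinarith
    have pair := tsum_commonDescents_pair cs summable (by rw [hM i j hij]; lia) (orderOf_eq hij)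
    rw [hM i j hij, ← mul_neg_geom_sum] at pair
    rw [h, descentWeight]
    refine mul_left_cancel₀ t_ne_one ?_
    linear_combination (1 + t) * pair - t ^ m * tsum_commonDescents_singleton cs summable i
      - t ^ m * tsum_commonDescents_singleton cs summable j
  · have : commonDescents cs J = ∅ := Set.eq_empty_iff_forall_notMem.2 fun w hw => by
      have := card_le_two_of_isRightDescent cs not_commute hw
      lia
    rw [this, tsum_empty, descentWeight_of_three_le m t h, mul_zero, zero_mul]

theorem poincare_series_value_complete_graph_four_general
    [Fintype B] {m n : ℕ} (hm : 3 ≤ m) (hcard : Fintype.card B = n)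
    (hM : ∀ i j : B, i ≠ j → M i j = m) (t : ℝ) (ht₀ : 0 ≤ t) (ht₁ : ((n : ℝ) - 1) * t < 1) :
    Summable (fun w => t ^ cs.length w) ∧
    ∑' w, t ^ cs.length w =
      2 * (1 + t) * (∑ k ∈ Finset.range m, t ^ k) /
        (2 * (1 - ((n : ℝ) - 1) * t) * (∑ k ∈ Finset.range m, t ^ k)
          + (n : ℝ) * ((n : ℝ) - 1) * t ^ m) := by
  subst hcard
  have summable := summable_pow_length cs ht₀ ht₁
  refine ⟨summable, ?_⟩
  have geom_sum_pos : 0 < ∑ k ∈ Finset.range m, t ^ k := geom_sum_pos ht₀ (by lia)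
  have denominator_pos : 0 <
      2 * (1 - ((Fintype.card B : ℝ) - 1) * t) * (∑ k ∈ Finset.range m, t ^ k) +
        (Fintype.card B : ℝ) * ((Fintype.card B : ℝ) - 1) * t ^ m := by
    have choose_two_nonneg : 0 ≤ (Fintype.card B : ℝ) * ((Fintype.card B : ℝ) - 1) := by
      have := Nat.cast_choose_two ℝ (Fintype.card B)
      linarith [((Fintype.card B).choose 2).cast_nonneg (α := ℝ)]
    have := sub_pos.2 ht₁
    positivity
  rw [eq_div_iff denominator_pos.ne', ← sum_neg_one_pow_mul_descentWeight]
  have inclusion_exclusion := sum_neg_one_pow_mul_tsum_commonDescents cs summable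
  rw [length_one, pow_zero] at inclusion_exclusion
  calc (∑' w, t ^ cs.length w) * (2 * ∑ J : Finset B, (-1) ^ J.card * descentWeight m t J.card)
      = 2 * ∑ J : Finset B,
          (-1) ^ J.card * (descentWeight m t J.card * ∑' w, t ^ cs.length w) := by
        simp_rw [← mul_assoc, ← Finset.sum_mul]
        ring
    _ = 2 * ((1 + t) * (∑ k ∈ Finset.range m, t ^ k) * ∑ J : Finset B,
          (-1) ^ J.card * ∑' w : commonDescents cs J, t ^ cs.length w.1) := by
        simp_rw [← mul_tsum_commonDescents_eq_descentWeight_mul cs hm hM ht₀ ht₁, Finset.mul_sum,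
          mul_left_comm]
    _ = _ := by rw [inclusion_exclusion]; ring

end PoincareSeries

/-- Let `n ≥ 3` and let `M` be the Coxeter matrix on an `n`-element index set whose diagram
is the complete graph with all edges labeled `4`, with Coxeter group `W` and length function
`ℓ`. Then for every real `t` with `0 ≤ t ≤ 1/n`, the family `(t ^ ℓ w)_{w ∈ W}` is summable
and the Poincaré series evaluates to
`2(1+t)(1+t+t²+t³) / (2(1−(n−1)t)(1+t+t²+t³) + n(n−1)t⁴)`. -/
theorem poincare_series_value_complete_graph_four
    {I : Type*} [Fintype I] {n : ℕ} (hn : 3 ≤ n) (hcard : Fintype.card I = n)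
    {W : Type*} [Group W]
    (M : CoxeterMatrix I) (hM : ∀ i j : I, i ≠ j → M i j = 4)
    (cs : CoxeterSystem M W)
    (t : ℝ) (ht0 : 0 ≤ t) (ht1 : t ≤ 1 / n) :
    Summable (fun w : W => t ^ cs.length w) ∧
    ∑' w : W, t ^ cs.length w =
      2 * (1 + t) * (1 + t + t ^ 2 + t ^ 3) /
        (2 * (1 - ((n : ℝ) - 1) * t) * (1 + t + t ^ 2 + t ^ 3)
          + (n : ℝ) * ((n : ℝ) - 1) * t ^ 4) := by
  have : ((n : ℝ) - 1) * t < 1 := by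
    rw [le_div_iff₀ (by positivity)] at ht1
    rcases ht0.eq_or_lt with rfl | ht0 <;> linarith
  simpa [Finset.sum_range_succ] using
    poincare_series_value_complete_graph_four_general cs (by norm_num) hcard hM t ht0 this
end
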